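/- Let I be an instance with n ≥ 2 agents and n objects, let p ∈ 𝕡, and let v be a unit-sum valuation profile consistent with I. Set t_1 = 1/n^{1/3} and t_i = 1/(min{i, n^{1/3}}·n^{2/3}) for 2 ≤ i ≤ n. Let μ be a maximum-weight matching of G_I under the weights assigning to each edge e = (a_i, h_j) of rank r the weight p_r + t_r if v_i(h_j) ≥ t_r and p_r otherwise. Then for every priority-p matching μ*, letting H = {(a_i, h_j) ∈ μ* : v_i(h_j) ≥ t_r where r is the rank of (a_i, h_j)}, it holds that Σ_{(a_i,h_j) ∈ H} v_i(h_j) ≤ n^{2/3}·SW(μ | v). -/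

import Mathlib

open Finset
open scoped Classical

/-- A one-sided matching instance with `n` agents and `n` objects.  Agent `i` has a
nonempty acceptable set `accept i` and a weak order `pref i` on it
(`pref i h h'` means agent `i` weakly prefers object `h` to object `h'`). -/
structure OSMInstance (n : ℕ) where
  accept : Fin n → Finset (Fin n)
  accept_nonempty : ∀ i, (accept i).Nonempty
  pref : Fin n → Fin n → Fin n → Prop
  pref_refl : ∀ i h, h ∈ accept i → pref i h h
  pref_trans : ∀ i h₁ h₂ h₃, h₁ ∈ accept i → h₂ ∈ accept i → h₃ ∈ accept i →
    pref i h₁ h₂ → pref i h₂ h₃ → pref i h₁ h₃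
  pref_total : ∀ i h₁ h₂, h₁ ∈ accept i → h₂ ∈ accept i → pref i h₁ h₂ ∨ pref i h₂ h₁

namespace OSMInstance

variable {n : ℕ}

/-- Agent `i` strictly prefers object `h` to object `h'`. -/
def strictPref (I : OSMInstance n) (i h h' : Fin n) : Prop :=
  I.pref i h h' ∧ ¬ I.pref i h' h

/-- The rank of the edge `(i, h)` of `G_I`: one plus the number of acceptable objects
that agent `i` strictly prefers to `h`. -/
noncomputable def edgeRank (I : OSMInstance n) (e : Fin n × Fin n) : ℕ :=
  ((I.accept e.1).filter (fun h' => I.strictPref e.1 h' e.2)).card + 1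

/-- A matching of `G_I`: a set of acceptable (agent, object) pairs in which every agent
and every object occurs at most once. -/
def IsMatching (I : OSMInstance n) (μ : Finset (Fin n × Fin n)) : Prop :=
  (∀ e ∈ μ, e.2 ∈ I.accept e.1) ∧
  (∀ e ∈ μ, ∀ e' ∈ μ, e.1 = e'.1 → e = e') ∧
  (∀ e ∈ μ, ∀ e' ∈ μ, e.2 = e'.2 → e = e')

/-- Total weight of a set of edges under the edge weights `w`. -/
def weightSum (w : Fin n × Fin n → ℝ) (μ : Finset (Fin n × Fin n)) : ℝ :=
  ∑ e ∈ μ, w e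

/-- Social welfare of the set of edges `μ` under the valuation profile `v`. -/
def SW (_I : OSMInstance n) (v : Fin n → Fin n → ℝ) (μ : Finset (Fin n × Fin n)) : ℝ :=
  ∑ e ∈ μ, v e.1 e.2

/-- `μ` is a maximum-weight matching of `G_I` with respect to edge weights `w`. -/
def IsMaxWeightMatching (I : OSMInstance n) (w : Fin n × Fin n → ℝ)
    (μ : Finset (Fin n × Fin n)) : Prop :=
  I.IsMatching μ ∧ ∀ μ', I.IsMatching μ' → weightSum w μ' ≤ weightSum w μ

/-- `μ` is a priority-`p` matching: a maximum-weight matching when every rank-`r` edge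
gets weight `p r`. -/
noncomputable def IsPriorityMatching (I : OSMInstance n) (p : ℕ → ℝ)
    (μ : Finset (Fin n × Fin n)) : Prop :=
  I.IsMaxWeightMatching (fun e => p (I.edgeRank e)) μ

/-- `v` is a valuation profile consistent with the instance: values lie in `[0,1]`,
unacceptable objects have value `0`, and on acceptable objects the values represent
the weak order. -/
def Consistent (I : OSMInstance n) (v : Fin n → Fin n → ℝ) : Prop :=
  (∀ i h, 0 ≤ v i h ∧ v i h ≤ 1) ∧
  (∀ i h, h ∉ I.accept i → v i h = 0) ∧
  (∀ i h h', h ∈ I.accept i → h' ∈ I.accept i → (I.pref i h h' ↔ v i h' ≤ v i h))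

/-- Unit-sum valuations: each agent's values over acceptable objects sum to `1`. -/
def UnitSum (I : OSMInstance n) (v : Fin n → Fin n → ℝ) : Prop :=
  ∀ i, ∑ h ∈ I.accept i, v i h = 1

/-- Unit-range valuations: each agent values some acceptable object `1`, some
acceptable object `0`, and has two non-equivalent acceptable objects. -/
def UnitRange (I : OSMInstance n) (v : Fin n → Fin n → ℝ) : Prop :=
  ∀ i, (∃ h ∈ I.accept i, v i h = 1) ∧ (∃ h ∈ I.accept i, v i h = 0) ∧
    ∃ h ∈ I.accept i, ∃ h' ∈ I.accept i, I.strictPref i h h'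

/-- Agent `i` is unmatched in `μ`. -/
def Unmatched (_I : OSMInstance n) (μ : Finset (Fin n × Fin n)) (i : Fin n) : Prop :=
  ∀ h, (i, h) ∉ μ

/-- Agent `i` weakly prefers their allocation in `μ'` to their allocation in `μ`
(being unmatched is strictly worse than receiving any acceptable object). -/
def WeakImprove (I : OSMInstance n) (μ' μ : Finset (Fin n × Fin n)) (i : Fin n) : Prop :=
  I.Unmatched μ i ∨ ∃ h h', (i, h) ∈ μ ∧ (i, h') ∈ μ' ∧ I.pref i h' h

/-- Agent `i` strictly prefers their allocation in `μ'` to their allocation in `μ`. -/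
def StrictImprove (I : OSMInstance n) (μ' μ : Finset (Fin n × Fin n)) (i : Fin n) : Prop :=
  (I.Unmatched μ i ∧ ∃ h', (i, h') ∈ μ') ∨
    ∃ h h', (i, h) ∈ μ ∧ (i, h') ∈ μ' ∧ I.strictPref i h' h

/-- `μ` is a Pareto optimal matching of `G_I`. -/
def ParetoOptimal (I : OSMInstance n) (μ : Finset (Fin n × Fin n)) : Prop :=
  I.IsMatching μ ∧
    ¬ ∃ μ', I.IsMatching μ' ∧ (∀ i, I.WeakImprove μ' μ i) ∧ ∃ i, I.StrictImprove μ' μ i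

/-- `sig I μ r` is the number of rank-`r` edges of `μ` (as an integer). -/
noncomputable def sig (I : OSMInstance n) (μ : Finset (Fin n × Fin n)) (r : ℕ) : ℤ :=
  ((μ.filter (fun e => I.edgeRank e = r)).card : ℤ)

end OSMInstance

/-- Lexicographic comparison `f ≤ g` of the length-`len` tuples `(f 0, …, f (len-1))`
and `(g 0, …, g (len-1))`. -/
def LexLe (len : ℕ) (f g : ℕ → ℤ) : Prop :=
  (∀ j < len, f j = g j) ∨ ∃ j < len, (∀ i < j, f i = g i) ∧ f j < g j

namespace OSMInstance

variable {n : ℕ}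

/-- `μ` is a rank-maximal matching: it lexicographically maximizes `(s_1, …, s_n)`. -/
noncomputable def RankMaximal (I : OSMInstance n) (μ : Finset (Fin n × Fin n)) : Prop :=
  I.IsMatching μ ∧ ∀ μ', I.IsMatching μ' →
    LexLe n (fun j => I.sig μ' (j + 1)) (fun j => I.sig μ (j + 1))

/-- `μ` is a max-cardinality rank-maximal matching: it lexicographically maximizes
`(Σ_i s_i, s_1, …, s_n)`. -/
noncomputable def MaxCardRankMaximal (I : OSMInstance n) (μ : Finset (Fin n × Fin n)) : Prop :=
  I.IsMatching μ ∧ ∀ μ', I.IsMatching μ' →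
    LexLe (n + 1) (fun j => if j = 0 then (μ'.card : ℤ) else I.sig μ' j)
      (fun j => if j = 0 then (μ.card : ℤ) else I.sig μ j)

/-- `μ` is a fair matching: it lexicographically maximizes
`(Σ_i s_i, -s_n, -s_(n-1), …, -s_1)`. -/
noncomputable def FairMatching (I : OSMInstance n) (μ : Finset (Fin n × Fin n)) : Prop :=
  I.IsMatching μ ∧ ∀ μ', I.IsMatching μ' →
    LexLe (n + 1) (fun j => if j = 0 then (μ'.card : ℤ) else -I.sig μ' (n + 1 - j))
      (fun j => if j = 0 then (μ.card : ℤ) else -I.sig μ (n + 1 - j))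

end OSMInstance

/-- The priority vector for rank-maximal matchings: a rank-`r` edge gets weight
`n ^ (2 * (n - r + 1))`. -/
noncomputable def pRankMaximal (n : ℕ) : ℕ → ℝ :=
  fun r => (n : ℝ) ^ (2 * (n - r + 1))

/-- The priority vector for max-cardinality rank-maximal matchings: a rank-`r` edge gets
weight `n ^ (2 * n) + n ^ (2 * (n - r))`. -/
noncomputable def pMaxCardRankMaximal (n : ℕ) : ℕ → ℝ :=
  fun r => (n : ℝ) ^ (2 * n) + (n : ℝ) ^ (2 * (n - r))

/-- The priority vector for fair matchings: a rank-`r` edge gets weight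
`4 * n ^ (2 * n) - 2 * n ^ (r - 1)`. -/
noncomputable def pFairVec (n : ℕ) : ℕ → ℝ :=
  fun r => 4 * (n : ℝ) ^ (2 * n) - 2 * (n : ℝ) ^ (r - 1)

/-- The set `𝕡` of the three priority vectors of interest. -/
noncomputable def PrioritySet (n : ℕ) : Set (ℕ → ℝ) :=
  {pRankMaximal n, pMaxCardRankMaximal n, pFairVec n}

/-- The four matching properties considered: Pareto optimal, rank-maximal,
max-cardinality rank-maximal, and fair. -/
inductive MatchProp where
  | po | rm | mcrm | fair

/-- `μ` satisfies the property `X` with respect to the instance `I`. -/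
noncomputable def SatisfiesProp {n : ℕ} (X : MatchProp) (I : OSMInstance n)
    (μ : Finset (Fin n × Fin n)) : Prop :=
  match X with
  | .po => I.ParetoOptimal μ
  | .rm => I.RankMaximal μ
  | .mcrm => I.MaxCardRankMaximal μ
  | .fair => I.FairMatching μ

namespace OSMInstance

variable {n : ℕ}

/-- An object together with the acceptable objects strictly preferred to it form a set of
`edgeRank` many objects. -/
lemma card_insert_strictPref (I : OSMInstance n) (e : Fin n × Fin n) :
    (insert e.2 ((I.accept e.1).filter (fun h' => I.strictPref e.1 h' e.2))).card =
      I.edgeRank e := by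
  rw [card_insert_of_notMem, edgeRank]
  exact fun h => (mem_filter.1 h).2.2 (mem_filter.1 h).2.1

lemma insert_strictPref_subset (I : OSMInstance n) {e : Fin n × Fin n}
    (he : e.2 ∈ I.accept e.1) :
    insert e.2 ((I.accept e.1).filter (fun h' => I.strictPref e.1 h' e.2)) ⊆ I.accept e.1 :=
  insert_subset he (filter_subset _ _)

lemma one_le_edgeRank (I : OSMInstance n) (e : Fin n × Fin n) : 1 ≤ I.edgeRank e := by
  simp [edgeRank]

lemma edgeRank_le (I : OSMInstance n) (e : Fin n × Fin n) : I.edgeRank e ≤ n := by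
  rw [← I.card_insert_strictPref]
  exact (card_le_univ _).trans_eq (Fintype.card_fin n)

/-- Under unit-sum valuations, a rank-`r` edge has value at most `1 / r`. -/
lemma edgeRank_mul_value_le_one (I : OSMInstance n) {v : Fin n → Fin n → ℝ}
    (hv : I.Consistent v) (hus : I.UnitSum v) {e : Fin n × Fin n}
    (he : e.2 ∈ I.accept e.1) : (I.edgeRank e : ℝ) * v e.1 e.2 ≤ 1 := by
  obtain ⟨hrange, -, hpref⟩ := hv
  rw [← hus e.1, ← I.card_insert_strictPref, ← nsmul_eq_mul]
  refine (card_nsmul_le_sum _ (v e.1) _ fun h hh => ?_).trans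
    (sum_le_sum_of_subset_of_nonneg (I.insert_strictPref_subset he)
      fun h _ _ => (hrange e.1 h).1)
  rcases mem_insert.1 hh with rfl | hh
  · exact le_rfl
  · obtain ⟨hacc, hstrict⟩ := mem_filter.1 hh
    exact (hpref e.1 h e.2 hacc he).1 hstrict.1

/-- A matching maximizing a perturbed weight `a + b` has at least as much perturbation `b` as
any matching maximizing `a`. -/
lemma IsMaxWeightMatching.weightSum_le_of_add {I : OSMInstance n} {a b : Fin n × Fin n → ℝ}
    {μ ν : Finset (Fin n × Fin n)} (hμ : I.IsMaxWeightMatching (fun e => a e + b e) μ)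
    (hν : I.IsMaxWeightMatching a ν) : weightSum b ν ≤ weightSum b μ := by
  have h₁ := hμ.2 ν hν.1
  have h₂ := hν.2 μ hμ.1
  simp only [weightSum, sum_add_distrib] at h₁ h₂ ⊢
  linarith

end OSMInstance

/-- the high-value part of any priority-`p` matching has welfare at most
`n^(2/3)` times the welfare of the maximum-weight matching under the non-adaptive
threshold weights shifted by the priorities, for unit-sum valuations and `p ∈ 𝕡`. -/
theorem highValue_bound_priority {n : ℕ} (hn : 2 ≤ n) (I : OSMInstance n)
    (p : ℕ → ℝ) (hp : p ∈ PrioritySet n)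
    (v : Fin n → Fin n → ℝ) (hv : I.Consistent v) (hus : I.UnitSum v)
    (t : ℕ → ℝ) (ht1 : t 1 = 1 / (n : ℝ) ^ ((1 : ℝ) / 3))
    (ht : ∀ i, 2 ≤ i → i ≤ n →
      t i = 1 / (min (i : ℝ) ((n : ℝ) ^ ((1 : ℝ) / 3)) * (n : ℝ) ^ ((2 : ℝ) / 3)))
    (w : Fin n × Fin n → ℝ)
    (hw : ∀ e, w e = if t (I.edgeRank e) ≤ v e.1 e.2
      then p (I.edgeRank e) + t (I.edgeRank e) else p (I.edgeRank e))
    (μ : Finset (Fin n × Fin n)) (hμ : I.IsMaxWeightMatching w μ)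
    (μstar : Finset (Fin n × Fin n)) (hstar : I.IsPriorityMatching p μstar) :
    ∑ e ∈ μstar.filter (fun e => t (I.edgeRank e) ≤ v e.1 e.2), v e.1 e.2 ≤
      (n : ℝ) ^ ((2 : ℝ) / 3) * I.SW v μ := by
  have hn1 : (1 : ℝ) ≤ n := by exact_mod_cast (by omega : 1 ≤ n)
  have hn0 : (0 : ℝ) < n := by linarith
  have hroot : (1 : ℝ) ≤ (n : ℝ) ^ ((1 : ℝ) / 3) := Real.one_le_rpow hn1 (by norm_num)
  have hsq : (0 : ℝ) < (n : ℝ) ^ ((2 : ℝ) / 3) := Real.rpow_pos_of_pos hn0 _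
  have hvt : ∀ e : Fin n × Fin n, e.2 ∈ I.accept e.1 →
      v e.1 e.2 ≤ (n : ℝ) ^ ((2 : ℝ) / 3) * t (I.edgeRank e) := by
    intro e he
    rcases (I.one_le_edgeRank e).eq_or_lt with h1 | h2
    · have hthirds : (n : ℝ) ^ ((2 : ℝ) / 3) =
          (n : ℝ) ^ ((1 : ℝ) / 3) * (n : ℝ) ^ ((1 : ℝ) / 3) := by
        rw [← Real.rpow_add hn0]; norm_num
      have hscaled : (n : ℝ) ^ ((2 : ℝ) / 3) * t 1 = (n : ℝ) ^ ((1 : ℝ) / 3) := by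
        rw [ht1, hthirds]; field_simp
      rw [← h1, hscaled]
      exact (hv.1 e.1 e.2).2.trans hroot
    · have hr : (0 : ℝ) < I.edgeRank e := by exact_mod_cast I.one_le_edgeRank e
      have hmin : 0 < min (I.edgeRank e : ℝ) ((n : ℝ) ^ ((1 : ℝ) / 3)) :=
        lt_min hr (by linarith)
      have hscaled : (n : ℝ) ^ ((2 : ℝ) / 3) * t (I.edgeRank e) =
          1 / min (I.edgeRank e : ℝ) ((n : ℝ) ^ ((1 : ℝ) / 3)) := by
        rw [ht _ h2 (I.edgeRank_le e)]; field_simp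
      rw [hscaled, le_div_iff₀ hmin, mul_comm]
      exact (mul_le_mul_of_nonneg_right (min_le_left _ _) (hv.1 e.1 e.2).1).trans
        (I.edgeRank_mul_value_le_one hv hus he)
  set b : Fin n × Fin n → ℝ := fun e =>
    if t (I.edgeRank e) ≤ v e.1 e.2 then t (I.edgeRank e) else 0 with hb
  have hwb : w = fun e => p (I.edgeRank e) + b e := by
    funext e
    rw [hw, hb]
    dsimp only
    split_ifs <;> simp
  rw [hwb] at hμ
  have hbμ : OSMInstance.weightSum b μ ≤ I.SW v μ := by
    refine sum_le_sum fun e _ => ?_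
    dsimp only [b]
    split_ifs with h
    · exact h
    · exact (hv.1 e.1 e.2).1
  calc ∑ e ∈ μstar.filter (fun e => t (I.edgeRank e) ≤ v e.1 e.2), v e.1 e.2
      ≤ ∑ e ∈ μstar.filter (fun e => t (I.edgeRank e) ≤ v e.1 e.2),
          (n : ℝ) ^ ((2 : ℝ) / 3) * t (I.edgeRank e) :=
        sum_le_sum fun e he => hvt e (hstar.1.1 e (mem_of_mem_filter e he))
    _ = (n : ℝ) ^ ((2 : ℝ) / 3) * OSMInstance.weightSum b μstar := by
        rw [← mul_sum, sum_filter, OSMInstance.weightSum]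
    _ ≤ (n : ℝ) ^ ((2 : ℝ) / 3) * I.SW v μ :=
        mul_le_mul_of_nonneg_left ((hμ.weightSum_le_of_add hstar).trans hbμ) hsq.le
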